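/- Let X be a real N×D matrix with N ≥ 1, and let α, β > 0. Define Λ = β·XᵀX + α·I and Σ = (1/N)·(XᵀX + (α/β)·I). Then Λ and Σ are positive definite (hence invertible), Λ = βN·Σ, and for every x* ∈ ℝ^D, β⁻¹ + x*ᵀΛ⁻¹x* = 1/β + (2/(βN))·E(x*), where E(x*) = ½·x*ᵀΣ⁻¹x*. -/

import Mathlib

/-! The Gram matrix `XᵀX` is positive semidefinite, so adding a positive multiple of the identity
gives a positive definite matrix; hence `S` is positive definite and so invertible. Since
`Λ = βN • S`, `Λ` is positive definite too and `Λ⁻¹ = (βN)⁻¹ • S⁻¹`, so that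
`xᵀΛ⁻¹x = (βN)⁻¹ xᵀS⁻¹x = (2/(βN)) E(x)`. -/

open Matrix

/-- With `Λ = β·XᵀX + α·I` and `Σ = (1/N)·(XᵀX + (α/β)·I)` (`N ≥ 1`,
`α, β > 0`), both matrices are positive definite, `Λ = βN·Σ`, and the Bayesian
predictive variance is an affine function of the Gaussian energy `E(x*) = ½·x*ᵀΣ⁻¹x*`:
`β⁻¹ + x*ᵀΛ⁻¹x* = 1/β + (2/(βN))·E(x*)`. -/
theorem predictive_variance_eq_affine_energy
    {N D : ℕ} (hN : 1 ≤ N) (X : Matrix (Fin N) (Fin D) ℝ)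
    (α β : ℝ) (hα : 0 < α) (hβ : 0 < β)
    (Λ S : Matrix (Fin D) (Fin D) ℝ)
    (hΛ : Λ = β • (Xᵀ * X) + α • (1 : Matrix (Fin D) (Fin D) ℝ))
    (hS : S = (1 / (N : ℝ)) • (Xᵀ * X + (α / β) • (1 : Matrix (Fin D) (Fin D) ℝ)))
    (E : (Fin D → ℝ) → ℝ) (hE : ∀ x, E x = (1 / 2) * (x ⬝ᵥ S⁻¹.mulVec x)) :
    Λ.PosDef ∧ S.PosDef ∧ Λ = (β * N) • S ∧
    ∀ xstar : Fin D → ℝ,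
      β⁻¹ + xstar ⬝ᵥ Λ⁻¹.mulVec xstar = 1 / β + (2 / (β * N)) * E xstar := by
  have hN' : (0 : ℝ) < N := by exact_mod_cast hN
  have hG : (Xᵀ * X).PosSemidef := by
    simpa [conjTranspose_eq_transpose_of_trivial] using posSemidef_conjTranspose_mul_self X
  have hSpos : S.PosDef := by
    rw [hS]
    exact (PosDef.posSemidef_add hG (PosDef.one.smul (div_pos hα hβ))).smul (one_div_pos.2 hN')
  have hc : 0 < β * N := mul_pos hβ hN'
  have hΛS : Λ = (β * N) • S := by
    rw [hΛ, hS, smul_smul, smul_add, smul_smul]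
    congr 2 <;> field_simp
  have hinv : Λ⁻¹ = (β * N)⁻¹ • S⁻¹ := by
    refine inv_eq_right_inv ?_
    rw [hΛS, smul_mul_smul_comm, mul_inv_cancel₀ hc.ne', one_smul,
      mul_nonsing_inv S ((isUnit_iff_isUnit_det S).1 hSpos.isUnit)]
  refine ⟨hΛS ▸ hSpos.smul hc, hSpos, hΛS, fun x => ?_⟩
  rw [hE, hinv, smul_mulVec, dotProduct_smul, smul_eq_mul]
  ring
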